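/- Let w₁, w₂ be non-increasing positive functions on I=(0,a), 0<a≤∞, such that w₁ ≤ C·w₂ a.e. for some constant C ≥ 1. Then for every measurable function f on I and every x > 0, ∫₀ˣ (f/w₂)^{*,w₂} dm ≤ C·∫₀ˣ (f/w₁)^{*,w₁} dm, the inequality understood in [0,∞], where (f/wᵢ)^{*,wᵢ} denotes the decreasing rearrangement of |f|/wᵢ with respect to the measure wᵢ·dm. -/

import Mathlib

open MeasureTheory Set Filter
open scoped ENNReal

/-- The interval `(0, a)` for `a : ℝ≥0∞` (equals `(0,∞)` when `a = ∞`). -/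
def Iset (a : ℝ≥0∞) : Set ℝ := {x : ℝ | 0 < x ∧ ENNReal.ofReal x < a}

/-- Lebesgue measure restricted to the interval `(0,a)`. -/
noncomputable def volI (a : ℝ≥0∞) : Measure ℝ := volume.restrict (Iset a)

/-- Decreasing rearrangement of an `ℝ≥0∞`-valued function with respect to a measure `μ`:
`f^{*,μ}(t) = inf {s > 0 : μ({f > s}) ≤ t}`. -/
noncomputable def rearrE (μ : Measure ℝ) (f : ℝ → ℝ≥0∞) (t : ℝ) : ℝ≥0∞ :=
  sInf {s : ℝ≥0∞ | 0 < s ∧ μ {x | s < f x} ≤ ENNReal.ofReal t}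

/-- Decreasing rearrangement of a real function with respect to a measure `μ` on `ℝ`:
`f^{*,μ}(t) = inf {s > 0 : μ({|f| > s}) ≤ t}`. -/
noncomputable def rearr (μ : Measure ℝ) (f : ℝ → ℝ) (t : ℝ) : ℝ≥0∞ :=
  rearrE μ (fun x => ENNReal.ofReal |f x|) t

/-- The measure `w·dm` on the set `I`. -/
noncomputable def wMeas (I : Set ℝ) (w : ℝ → ℝ) : Measure ℝ :=
  (volume.restrict I).withDensity (fun t => ENNReal.ofReal (w t))

/-- `W(t) = ∫₀ᵗ w dm`. -/
noncomputable def Wfun (w : ℝ → ℝ) (t : ℝ) : ℝ := ∫ s in Set.Ioo (0:ℝ) t, w s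

/-- `b = ∫_I w dm` as an extended real number. -/
noncomputable def bval (a : ℝ≥0∞) (w : ℝ → ℝ) : ℝ≥0∞ := ∫⁻ x in Iset a, ENNReal.ofReal (w x)

lemma vol_ofReal_lt (c : ℝ≥0∞) : volume {u : ℝ | 0 < u ∧ ENNReal.ofReal u < c} = c := by
  induction c using ENNReal.recTopCoe with
  | top =>
    have : {u : ℝ | 0 < u ∧ ENNReal.ofReal u < ⊤} = Ioi 0 := by ext; simp
    rw [this, Real.volume_Ioi]
  | coe d =>
    have : {u : ℝ | 0 < u ∧ ENNReal.ofReal u < d} = Ioo 0 (d : ℝ) := by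
      ext u
      simp only [mem_ofPred_eq, mem_Ioo]
      refine and_congr_right fun hu => ?_
      rw [← ENNReal.ofReal_coe_nnreal, ENNReal.ofReal_lt_ofReal_iff_of_nonneg hu.le]
    rw [this, Real.volume_Ioo]
    simp

lemma layer {μ : Measure ℝ} [SFinite μ] {G : ℝ → ℝ≥0∞} (hG : Measurable G) :
    ∫⁻ t, G t ∂μ = ∫⁻ u in Ioi (0:ℝ), μ {t | ENNReal.ofReal u < G t} := by
  have hS : MeasurableSet {p : ℝ × ℝ | ENNReal.ofReal p.2 < G p.1} :=
    measurableSet_lt (ENNReal.measurable_ofReal.comp measurable_snd) (hG.comp measurable_fst)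
  have h1 : ∀ t, G t = ∫⁻ u in Ioi (0:ℝ),
      {p : ℝ × ℝ | ENNReal.ofReal p.2 < G p.1}.indicator (fun _ => (1:ℝ≥0∞)) (t, u) := by
    intro t
    have h2 : MeasurableSet {u : ℝ | ENNReal.ofReal u < G t} :=
      measurableSet_lt ENNReal.measurable_ofReal measurable_const
    have : ∀ u, {p : ℝ × ℝ | ENNReal.ofReal p.2 < G p.1}.indicator (fun _ => (1:ℝ≥0∞)) (t, u)
      = {u : ℝ | ENNReal.ofReal u < G t}.indicator (fun _ => 1) u := fun u => rfl
    simp_rw [this]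
    rw [lintegral_indicator_const h2, one_mul, Measure.restrict_apply h2]
    conv_lhs => rw [← vol_ofReal_lt (G t)]
    congr 1
    ext u; simp [and_comm]
  rw [lintegral_congr h1, lintegral_lintegral_swap]
  · refine lintegral_congr fun u => ?_
    have h2 : MeasurableSet {t : ℝ | ENNReal.ofReal u < G t} :=
      measurableSet_lt measurable_const hG
    have : ∀ t, {p : ℝ × ℝ | ENNReal.ofReal p.2 < G p.1}.indicator (fun _ => (1:ℝ≥0∞)) (t, u)
      = {t : ℝ | ENNReal.ofReal u < G t}.indicator (fun _ => 1) t := fun u => rfl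
    simp_rw [this]
    rw [lintegral_indicator_const h2, one_mul]
  · exact (measurable_const.indicator hS).aemeasurable

lemma rearrE_le_iff (μ : Measure ℝ) (g : ℝ → ℝ≥0∞) (t : ℝ) (u : ℝ≥0∞) :
    rearrE μ g t ≤ u ↔ μ {y | u < g y} ≤ ENNReal.ofReal t := by
  constructor
  · intro h
    by_cases hu : u = ⊤
    · subst hu; simp
    obtain ⟨v, hv, hv1, hv2⟩ := exists_seq_strictAnti_tendsto' (lt_top_iff_ne_top.2 hu)
    have hmem : ∀ n, μ {y | v n < g y} ≤ ENNReal.ofReal t := by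
      intro n
      obtain ⟨s, hs, hsv⟩ := sInf_lt_iff.1 (lt_of_le_of_lt h (hv1 n).1)
      exact (measure_mono fun y hy => lt_trans hsv hy).trans hs.2
    have hU : {y | u < g y} = ⋃ n, {y | v n < g y} := by
      ext y
      simp only [mem_ofPred_eq, mem_iUnion]
      constructor
      · intro hy
        exact (hv2.eventually (gt_mem_nhds hy)).exists
      · rintro ⟨n, hn⟩
        exact (hv1 n).1.trans hn
    rw [hU, Monotone.measure_iUnion]
    · exact iSup_le hmem
    · intro m n hmn y hy
      exact lt_of_le_of_lt (hv.antitone hmn) hy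
  · intro h
    refine le_of_forall_gt_imp_ge_of_dense fun v hv => sInf_le ⟨zero_le.trans_lt hv, ?_⟩
    exact (measure_mono fun y hy => lt_trans hv hy).trans h

lemma rearrE_anti (μ : Measure ℝ) (g : ℝ → ℝ≥0∞) : Antitone (rearrE μ g) := by
  intro s t hst
  rw [rearrE_le_iff]
  exact ((rearrE_le_iff μ g s _).1 le_rfl).trans (ENNReal.ofReal_le_ofReal hst)

lemma intRearr (μ : Measure ℝ) (g : ℝ → ℝ≥0∞) (x : ℝ) :
    ∫⁻ t in Ioo 0 x, rearrE μ g t =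
      ∫⁻ u in Ioi (0:ℝ), min (ENNReal.ofReal x) (μ {y | ENNReal.ofReal u < g y}) := by
  have hm : Measurable (rearrE μ g) := (rearrE_anti μ g).measurable
  rw [layer hm]
  refine lintegral_congr fun u => ?_
  have h2 : MeasurableSet {t : ℝ | ENNReal.ofReal u < rearrE μ g t} :=
      measurableSet_lt measurable_const hm
  rw [Measure.restrict_apply h2]
  conv_rhs => rw [← vol_ofReal_lt (min _ _)]
  congr 1
  ext t
  simp only [mem_inter_iff, mem_ofPred_eq, mem_Ioo, lt_min_iff]
  have : ENNReal.ofReal u < rearrE μ g t ↔ ENNReal.ofReal t < μ {y | ENNReal.ofReal u < g y} := by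
    rw [← not_le, rearrE_le_iff, not_le]
  rw [this]
  constructor
  · rintro ⟨h, h0, h1⟩
    exact ⟨h0, (ENNReal.ofReal_lt_ofReal_iff_of_nonneg h0.le).2 h1, h⟩
  · rintro ⟨h0, h1, h⟩
    exact ⟨h, h0, (ENNReal.ofReal_lt_ofReal_iff_of_nonneg h0.le).1 h1⟩

lemma intSub {μ : Measure ℝ} [SFinite μ] {g : ℝ → ℝ≥0∞} (hg : Measurable g) (s : ℝ) (hs : 0 ≤ s) :
    ∫⁻ y, (g y - ENNReal.ofReal s) ∂μ =
      ∫⁻ u in Ioi s, μ {y | ENNReal.ofReal u < g y} := by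
  rw [layer (hg.sub_const _)]
  rw [← lintegral_indicator measurableSet_Ioi, ← lintegral_indicator measurableSet_Ioi,
    ← lintegral_add_right_eq_self ((Ioi s).indicator _) s]
  refine lintegral_congr fun u => ?_
  by_cases hu : 0 < u
  · rw [indicator_of_mem (by exact hu), indicator_of_mem (by simpa using hu)]
    congr 1
    ext y
    simp only [mem_ofPred_eq]
    rw [lt_tsub_iff_right, ENNReal.ofReal_add hu.le hs]
  · rw [indicator_of_notMem (by exact hu), indicator_of_notMem (by simpa using hu)]

lemma splitI (s : ℝ) (hs : 0 ≤ s) (F : ℝ → ℝ≥0∞) :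
    ∫⁻ u in Ioi (0:ℝ), F u = (∫⁻ u in Ioo 0 s, F u) + ∫⁻ u in Ioi s, F u := by
  rw [← Ioc_union_Ioi_eq_Ioi hs, lintegral_union measurableSet_Ioi (by
    rw [Set.disjoint_left]; intro u h1 h2; exact absurd h1.2 (not_le.2 h2)),
    restrict_Ioo_eq_restrict_Ioc]

lemma upper {μ : Measure ℝ} [SFinite μ] {g : ℝ → ℝ≥0∞} (hg : Measurable g) (s : ℝ) (hs : 0 ≤ s)
    (x : ℝ) :
    ∫⁻ t in Ioo 0 x, rearrE μ g t ≤
      ENNReal.ofReal x * ENNReal.ofReal s + ∫⁻ y, (g y - ENNReal.ofReal s) ∂μ := by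
  rw [intRearr, intSub hg s hs, splitI s hs]
  gcongr
  · calc _ ≤ ∫⁻ u in Ioo 0 s, ENNReal.ofReal x := lintegral_mono fun u => min_le_left _ _
      _ = _ := by simp
  · exact min_le_right _ _

lemma lower {μ : Measure ℝ} [SFinite μ] {g : ℝ → ℝ≥0∞} (hg : Measurable g) (s : ℝ) (hs : 0 ≤ s)
    (x : ℝ) (h : rearrE μ g x = ENNReal.ofReal s) :
      ENNReal.ofReal x * ENNReal.ofReal s + ∫⁻ y, (g y - ENNReal.ofReal s) ∂μ ≤
    ∫⁻ t in Ioo 0 x, rearrE μ g t := by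
  rw [intRearr, intSub hg s hs, splitI s hs]
  gcongr ?_ + ?_
  · calc _ = ∫⁻ u in Ioo 0 s, ENNReal.ofReal x := by simp
      _ ≤ _ := setLIntegral_mono' measurableSet_Ioo fun u hu => by
        refine le_min le_rfl ?_
        by_contra hc
        have := (rearrE_le_iff μ g x _).2 (not_le.1 hc).le
        rw [h, ENNReal.ofReal_le_ofReal_iff hu.1.le] at this
        exact absurd this (not_le.2 hu.2)
  · refine setLIntegral_mono' measurableSet_Ioi fun u hu => le_min ?_ le_rfl
    rw [← rearrE_le_iff, h]
    exact ENNReal.ofReal_le_ofReal (le_of_lt hu)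

lemma measI (a : ℝ≥0∞) : MeasurableSet (Iset a) :=
  measurableSet_Ioi.inter (measurableSet_lt ENNReal.measurable_ofReal measurable_const)

lemma intW (a : ℝ≥0∞) (w f : ℝ → ℝ) (hw : ∀ x ∈ Iset a, 0 < w x) (hwm : Measurable w)
    (hf : Measurable f) (s : ℝ) (hs : 0 ≤ s) :
    ∫⁻ y, (ENNReal.ofReal |f y / w y| - ENNReal.ofReal s) ∂(wMeas (Iset a) w) =
      ∫⁻ y in Iset a, ENNReal.ofReal (|f y| - s * w y) := by
  unfold wMeas
  have hm : Measurable fun y => ENNReal.ofReal |f y / w y| - ENNReal.ofReal s :=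
    (hf.div hwm).abs.ennreal_ofReal.sub_const _
  rw [lintegral_withDensity_eq_lintegral_mul _ hwm.ennreal_ofReal hm]
  refine setLIntegral_congr_fun (measI a) fun y hy => ?_
  have h := hw y hy
  simp only [Pi.mul_apply]
  rw [← ENNReal.ofReal_sub _ hs, ← ENNReal.ofReal_mul h.le, abs_div, abs_of_pos h]
  congr 1
  field_simp

/-- If `w₁ ≤ C·w₂` a.e. on `I` for non-increasing positive weights `w₁, w₂` and
`C ≥ 1`, then `∫₀ˣ (f/w₂)^{*,w₂} ≤ C·∫₀ˣ (f/w₁)^{*,w₁}` for every measurable `f` and `x > 0`. -/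
theorem stmt_8 (a : ℝ≥0∞) (ha : 0 < a) (w₁ w₂ : ℝ → ℝ) (C : ℝ) (hC : 1 ≤ C)
    (h₁pos : ∀ x ∈ Iset a, 0 < w₁ x) (h₁anti : AntitoneOn w₁ (Iset a)) (h₁meas : Measurable w₁)
    (h₂pos : ∀ x ∈ Iset a, 0 < w₂ x) (h₂anti : AntitoneOn w₂ (Iset a)) (h₂meas : Measurable w₂)
    (hle : ∀ᵐ x ∂(volI a), w₁ x ≤ C * w₂ x)
    (f : ℝ → ℝ) (hf : Measurable f) (x : ℝ) (hx : 0 < x) :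
    ∫⁻ t in Set.Ioo 0 x, rearr (wMeas (Iset a) w₂) (fun y => f y / w₂ y) t
      ≤ ENNReal.ofReal C *
          ∫⁻ t in Set.Ioo 0 x, rearr (wMeas (Iset a) w₁) (fun y => f y / w₁ y) t := by
  have hC0 : 0 < C := by linarith
  have hC1 : 1 ≤ ENNReal.ofReal C := by simpa using hC
  have i1 : SFinite (wMeas (Iset a) w₁) := by unfold wMeas; infer_instance
  have i2 : SFinite (wMeas (Iset a) w₂) := by unfold wMeas; infer_instance
  have g1 : Measurable fun y => ENNReal.ofReal |f y / w₁ y| := (hf.div h₁meas).abs.ennreal_ofReal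
  have g2 : Measurable fun y => ENNReal.ofReal |f y / w₂ y| := (hf.div h₂meas).abs.ennreal_ofReal
  unfold rearr
  by_cases htop : rearrE (wMeas (Iset a) w₁) (fun y => ENNReal.ofReal |f y / w₁ y|) x = ⊤
  · have : ∫⁻ t in Ioo 0 x, rearrE (wMeas (Iset a) w₁) (fun y => ENNReal.ofReal |f y / w₁ y|) t
        = ⊤ := by
      rw [eq_top_iff]
      calc (⊤ : ℝ≥0∞) = ∫⁻ t in Ioo 0 x, ⊤ := by simp [ENNReal.top_mul, hx]
        _ ≤ _ := setLIntegral_mono' measurableSet_Ioo fun t ht => by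
          rw [← htop]; exact rearrE_anti _ _ ht.2.le
    rw [this, ENNReal.mul_top (by simpa using hC0)]
    exact le_top
  · obtain ⟨s, hs, hsx⟩ : ∃ s : ℝ, 0 ≤ s ∧
        rearrE (wMeas (Iset a) w₁) (fun y => ENNReal.ofReal |f y / w₁ y|) x = ENNReal.ofReal s :=
      ⟨_, ENNReal.toReal_nonneg, (ENNReal.ofReal_toReal htop).symm⟩
    have hCs : 0 ≤ C * s := by positivity
    refine (upper g2 (C * s) hCs x).trans ?_
    refine le_trans ?_ (mul_le_mul_right (lower g1 s hs x hsx) _)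
    rw [intW a w₂ f h₂pos h₂meas hf _ hCs, intW a w₁ f h₁pos h₁meas hf _ hs, mul_add]
    refine add_le_add (le_of_eq ?_) ?_
    · rw [ENNReal.ofReal_mul hC0.le]; ring
    · refine le_trans ?_ (le_mul_of_one_le_left zero_le hC1)
      refine lintegral_mono_ae ?_
      filter_upwards [hle] with y hy
      refine ENNReal.ofReal_le_ofReal ?_
      nlinarith [mul_le_mul_of_nonneg_left hy hs]
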